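/- Let k ≥ 1 and let S_2≀S_k denote the subgroup of S_{2k} consisting of permutations that map each pair {2i−1,2i} (1 ≤ i ≤ k) to some pair {2j−1,2j}. Then the permutation character of S_{2k} on the cosets of S_2≀S_k is multiplicity-free, and, regarding S_{2k} as the subgroup of S_{2k+1} fixing the point 2k+1, the permutation character of S_{2k+1} on the cosets of S_2≀S_k is also multiplicity-free. -/

import Mathlib

/-- The permutation character of `G` on the cosets of `H` is multiplicity-free:
every irreducible complex representation of `G` has at most a one-dimensional
subspace of `H`-fixed vectors. -/
noncomputable def IsMultFree {G : Type} [Group G] (H : Subgroup G) : Prop :=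
  ∀ V : FDRep ℂ G, CategoryTheory.Simple V →
    Module.finrank ℂ (Representation.invariants (V.ρ.comp H.subtype)) ≤ 1

/-- The subgroup of permutations preserving the partition of `α` into the fibres of a
colouring `c` (two points get mapped to the same fibre iff they lie in the same fibre). -/
def colorStab {α : Type*} {β : Sort*} (c : α → β) : Subgroup (Equiv.Perm α) where
  carrier := {g | ∀ i j : α, c i = c j ↔ c (g i) = c (g j)}
  one_mem' := by intro i j; simp
  mul_mem' := by
    intro a b ha hb i j
    simpa [Equiv.Perm.mul_apply] using (hb i j).trans (ha (b i) (b j))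
  inv_mem' := by
    intro g hg i j
    simpa using (hg (g⁻¹ i) (g⁻¹ j)).symm

/-- The natural embedding of the symmetric group on `α` into the symmetric group on
`Option α` (one extra point, which is fixed). -/
def optionHom (α : Type*) : Equiv.Perm α →* Equiv.Perm (Option α) where
  toFun e := e.optionCongr
  map_one' := by
    ext x
    cases x <;> simp
  map_mul' a b := by
    ext x
    cases x <;> simp [Equiv.Perm.mul_apply]

/-!
Gelfand's criterion: if `g⁻¹ ∈ H g H` for every `g`, then the operators `v ↦ e (g • v)` on the
`H`-fixed vectors of a representation (`e` the projection averaging over `H`) commute. When the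
representation is irreducible, the images of any nonzero fixed vector under them span, so Schur's
lemma for commutative algebras bounds the dimension by one.

The criterion is verified for both groups at once on a set with two further points. Let `τ` be a
fixed-point-free involution and `g` a permutation fixing `p`. The involutions `τ` and `g τ g⁻¹`
generate a dihedral group; no reflection in it has a fixed point, so point stabilizers consist of
rotations and are preserved by the automorphism exchanging the two generators. Hence this
automorphism is implemented by a permutation `x` fixing `p`, and `x g` and `g⁻¹ x` commute with `τ`.
For permutations of `α` with one extra point, take `p` to be a second extra point, which `τ`
exchanges with the first: a permutation fixing `p` and commuting with `τ` then fixes both.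
-/

open DoubleCoset DihedralGroup

/-! ### Gelfand's criterion -/

section FixedVectors

variable {k G V : Type*} [Group G] [AddCommGroup V]

section HeckeOperator

variable [CommRing k] [Module k V] (ρ : Representation k G V) (H : Subgroup G)
  [Fintype H] [Invertible (Fintype.card H : k)]

/-- The projection of a representation onto its `H`-fixed vectors which averages over `H`. -/
noncomputable def fixedProj : V →ₗ[k] Representation.invariants (ρ.comp H.subtype) :=
  (Representation.isProj_averageMap (ρ.comp H.subtype)).codRestrict

/-- The Hecke operator of `g`: the endomorphism of the `H`-fixed vectors which applies `g` and
projects back. -/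
noncomputable def heckeOperator (g : G) :
    Module.End k (Representation.invariants (ρ.comp H.subtype)) :=
  fixedProj ρ H ∘ₗ ρ g ∘ₗ Submodule.subtype _

variable {H}

theorem heckeOperator_apply (g : G) (v : Representation.invariants (ρ.comp H.subtype)) :
    heckeOperator ρ H g v = fixedProj ρ H (ρ g v) :=
  rfl

theorem coe_fixedProj_apply (v : V) :
    (fixedProj ρ H v : V) = ⅟(Fintype.card H : k) • ∑ h : H, ρ h v := by
  simp [fixedProj, GroupAlgebra.average]

theorem fixedProj_surjective : Function.Surjective (fixedProj ρ H) := fun v =>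
  ⟨v, LinearMap.IsProj.codRestrict_apply_cod _ v⟩

theorem fixedProj_map_of_mem {h : G} (hh : h ∈ H) (v : V) :
    fixedProj ρ H (ρ h v) = fixedProj ρ H v := by
  ext
  rw [coe_fixedProj_apply, coe_fixedProj_apply]
  congr 1
  exact Fintype.sum_equiv (Equiv.mulRight ⟨h, hh⟩) _ _ fun x => by simp

theorem heckeOperator_eq_of_mem_doubleCoset {g g' : G} (hg : g' ∈ doubleCoset g (H : Set G) H) :
    heckeOperator ρ H g' = heckeOperator ρ H g := by
  obtain ⟨a, ha, b, hb, rfl⟩ := mem_doubleCoset.1 hg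
  ext1 v
  have hv : ρ b v = v := v.2 ⟨b, hb⟩
  simp only [heckeOperator_apply, map_mul, Module.End.mul_apply, hv, fixedProj_map_of_mem ρ ha]

theorem heckeOperator_mul (g g' : G) :
    heckeOperator ρ H g * heckeOperator ρ H g' =
      ⅟(Fintype.card H : k) • ∑ h : H, heckeOperator ρ H (g * h * g') := by
  ext1 v
  simp [heckeOperator_apply, coe_fixedProj_apply ρ (ρ g' v)]

end HeckeOperator

/-- `(G, H)` is a symmetric Gelfand pair: every double coset of `H` is closed under inversion. -/
def IsSymmetricGelfandPair (H : Subgroup G) : Prop :=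
  ∀ g : G, g⁻¹ ∈ doubleCoset g (H : Set G) H

theorem IsSymmetricGelfandPair.of_map {G' : Type*} [Group G'] {H : Subgroup G} {f : G →* G'}
    (hf : Function.Injective f)
    (h : ∀ g, (f g)⁻¹ ∈ doubleCoset (f g) (H.map f : Set G') (H.map f)) :
    IsSymmetricGelfandPair H := by
  intro g
  obtain ⟨_, ⟨a, ha, rfl⟩, _, ⟨b, hb, rfl⟩, hab⟩ := mem_doubleCoset.1 (h g)
  exact mem_doubleCoset.2 ⟨a, ha, b, hb, hf (by simpa only [map_inv, map_mul] using hab)⟩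

theorem IsSymmetricGelfandPair.commute_heckeOperator [CommRing k] [Module k V] {H : Subgroup G}
    [Fintype H] [Invertible (Fintype.card H : k)] (hH : IsSymmetricGelfandPair H)
    (ρ : Representation k G V) (g g' : G) :
    Commute (heckeOperator ρ H g) (heckeOperator ρ H g') := by
  have hinv (x : G) : heckeOperator ρ H x⁻¹ = heckeOperator ρ H x :=
    heckeOperator_eq_of_mem_doubleCoset ρ (hH x)
  calc heckeOperator ρ H g * heckeOperator ρ H g'
    _ = ⅟(Fintype.card H : k) • ∑ h : H, heckeOperator ρ H (g * h * g') :=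
      heckeOperator_mul ρ g g'
    _ = ⅟(Fintype.card H : k) • ∑ h : H, heckeOperator ρ H (g'⁻¹ * h * g⁻¹) := by
      congr 1
      refine Fintype.sum_equiv (Equiv.inv H) _ _ fun h => ?_
      rw [← hinv]
      simp [mul_assoc]
    _ = heckeOperator ρ H g' * heckeOperator ρ H g := by
      rw [← heckeOperator_mul, hinv, hinv]

theorem finrank_le_one_of_commute_of_span_eq_top {K W ι : Type*} [Field K] [IsAlgClosed K]
    [AddCommGroup W] [Module K W] [FiniteDimensional K W] (T : ι → Module.End K W)
    (hcomm : ∀ i j, Commute (T i) (T j))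
    (hspan : ∀ v ≠ 0, Submodule.span K (Set.range fun i => T i v) = ⊤) :
    Module.finrank K W ≤ 1 := by
  cases subsingleton_or_nontrivial W
  · simp [Module.finrank_zero_of_subsingleton]
  let A := Algebra.adjoin K (Set.range T)
  have : IsMulCommutative A := Algebra.isMulCommutative_adjoin K <| by
    rintro _ ⟨i, rfl⟩ _ ⟨j, rfl⟩
    exact hcomm i j
  have : IsSimpleModule A W := by
    refine isSimpleModule_iff_toSpanSingleton_surjective.2 ⟨inferInstance, fun v hv w => ?_⟩
    have hle : Submodule.span K (Set.range fun i => T i v) ≤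
        A.toSubmodule.map (LinearMap.applyₗ v) := by
      rw [Submodule.span_le]
      rintro _ ⟨i, rfl⟩
      exact ⟨T i, Algebra.subset_adjoin ⟨i, rfl⟩, rfl⟩
    obtain ⟨a, ha, haw⟩ := hle ((hspan v hv).ge (Submodule.mem_top (x := w)))
    exact ⟨⟨a, ha⟩, haw⟩
  exact (IsSimpleModule.finrank_eq_one_of_isMulCommutative A W K).le

theorem span_range_apply_eq_top [Field k] [Module k V] (ρ : Representation k G V)
    [ρ.IsIrreducible] {v : V} (hv : v ≠ 0) :
    Submodule.span k (Set.range fun g => ρ g v) = ⊤ := by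
  have map_le (g : G) : Submodule.span k (Set.range fun g => ρ g v) ≤
      (Submodule.span k (Set.range fun g => ρ g v)).comap (ρ g) := by
    rw [Submodule.span_le]
    rintro _ ⟨g', rfl⟩
    exact Submodule.subset_span ⟨g * g', by simp⟩
  let N : Subrepresentation ρ :=
    ⟨Submodule.span k (Set.range fun g => ρ g v), fun g _ hw => map_le g hw⟩
  have hvN : v ∈ N.toSubmodule := Submodule.subset_span ⟨1, by simp⟩
  rcases eq_bot_or_eq_top N with hN | hN
  · rw [hN] at hvN
    exact absurd hvN hv
  · exact congrArg Subrepresentation.toSubmodule hN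

theorem IsSymmetricGelfandPair.finrank_invariants_le_one [Field k] [IsAlgClosed k] [Module k V]
    [FiniteDimensional k V] {H : Subgroup G} [Finite H] [NeZero (Nat.card H : k)]
    (hH : IsSymmetricGelfandPair H) (ρ : Representation k G V) [ρ.IsIrreducible] :
    Module.finrank k (Representation.invariants (ρ.comp H.subtype)) ≤ 1 := by
  have := Fintype.ofFinite H
  have : Invertible (Fintype.card H : k) :=
    invertibleOfNonzero (by rw [Fintype.card_eq_nat_card]; exact NeZero.ne _)
  refine finrank_le_one_of_commute_of_span_eq_top (heckeOperator ρ H)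
    (hH.commute_heckeOperator ρ) fun v hv => ?_
  calc Submodule.span k (Set.range fun g => heckeOperator ρ H g v)
    _ = (Submodule.span k (Set.range fun g => ρ g v)).map (fixedProj ρ H) := by
      rw [Submodule.map_span, ← Set.range_comp]
      rfl
    _ = ⊤ := by
      rw [span_range_apply_eq_top ρ (by simpa using hv), Submodule.map_top,
        LinearMap.range_eq_top.2 (fixedProj_surjective ρ)]

end FixedVectors

open CategoryTheory in
theorem isIrreducible_of_simple {k G : Type*} [Field k] [Group G] (V : FDRep k G) [Simple V] :
    Representation.IsIrreducible V.ρ where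
  exists_pair_ne := by
    refine ⟨⊥, ⊤, fun h => id_nonzero V ?_⟩
    ext v
    have hv : v ∈ (⊥ : Subrepresentation V.ρ) := by rw [h]; exact Submodule.mem_top
    exact hv
  eq_bot_or_eq_top N := by
    let ι : FDRep.of N.toRepresentation ⟶ V :=
      ⟨InducedCategory.homMk (ModuleCat.ofHom N.toSubmodule.subtype), fun _ => rfl⟩
    have : Mono ι := ConcreteCategory.mono_of_injective _ N.toSubmodule.injective_subtype
    by_cases hι : ι = 0
    · left
      refine Subrepresentation.toSubmodule_injective ((Submodule.eq_bot_iff _).2 fun v hv => ?_)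
      exact congrArg (fun f : FDRep.of N.toRepresentation ⟶ V => f.hom.hom.hom ⟨v, hv⟩) hι
    · right
      have := isIso_of_mono_of_nonzero hι
      refine Subrepresentation.toSubmodule_injective (eq_top_iff.2 fun v _ => ?_)
      obtain ⟨w, rfl⟩ := (FDRep.isoToLinearEquiv (asIso ι)).surjective v
      exact w.2

theorem IsSymmetricGelfandPair.isMultFree {G : Type} [Group G] {H : Subgroup G} [Finite H]
    (hH : IsSymmetricGelfandPair H) : IsMultFree H := by
  intro V _
  have := isIrreducible_of_simple V
  exact hH.finrank_invariants_le_one V.ρ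

/-! ### Permutations exchanging two fixed-point-free involutions -/

section TwistedEquivariance

variable {G α : Type*} [Group G] [MulAction G α]

variable (G) in
theorem exists_orbit_representatives (p : α) :
    ∃ rep : α → α, rep p = p ∧ (∀ a, a ∈ MulAction.orbit G (rep a)) ∧
      ∀ (g : G) (a : α), rep (g • a) = rep a := by
  classical
  let mk : α → MulAction.orbitRel.Quotient G α := Quotient.mk _
  let out := Function.update Quotient.out (mk p) p
  have hout (q) : mk (out q) = q := by
    by_cases hq : q = mk p
    · simp [out, hq]
    · simp [out, hq, mk]
  refine ⟨fun a => out (mk a), by simp [out], fun a => ?_, fun g a => ?_⟩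
  · exact MulAction.orbitRel_apply.1 (Quotient.exact (hout (mk a)).symm)
  · exact congrArg out (Quotient.sound (MulAction.mem_orbit a g))

theorem exists_perm_smul_eq_map_smul (φ : G →* G) (hφ : Function.Involutive φ)
    (hstab : ∀ (g : G) (a : α), g • a = a → φ g • a = a) (p : α) :
    ∃ x : Equiv.Perm α, x p = p ∧ ∀ (g : G) (a : α), x (g • a) = φ g • x a := by
  obtain ⟨rep, rep_p, mem_orbit_rep, rep_smul⟩ := exists_orbit_representatives G p
  choose w hw using mem_orbit_rep
  beta_reduce at hw
  let f : α → α := fun a => φ (w a) • rep a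
  have f_smul_rep (g : G) (a : α) : f (g • rep a) = φ g • rep a := by
    have hrep : rep (g • rep a) = rep a := by
      rw [rep_smul, ← rep_smul (w a) (rep a), hw]
    have hfix : (g⁻¹ * w (g • rep a)) • rep a = rep a := by
      rw [mul_smul, inv_smul_eq_iff]
      simpa only [hrep] using hw (g • rep a)
    have := hstab _ _ hfix
    rw [map_mul, map_inv, mul_smul, inv_smul_eq_iff] at this
    simpa only [f, hrep] using this
  have f_smul (g : G) (a : α) : f (g • a) = φ g • f a := by
    conv_lhs => rw [← hw a, ← mul_smul, f_smul_rep, map_mul, mul_smul]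
  have f_invol : Function.Involutive f := fun a => by
    calc f (f a) = f (φ (w a) • rep a) := rfl
      _ = a := by rw [f_smul_rep, hφ, hw]
  refine ⟨f_invol.toPerm, ?_, f_smul⟩
  simpa [rep_p] using f_smul_rep 1 p

end TwistedEquivariance

/-- The homomorphism from the infinite dihedral group to a group which sends the two generating
reflections `sr 0` and `sr 1` to given involutions `s` and `t`. -/
def dihedralLift {G : Type*} [Group G] (s t : G) (hs : s * s = 1) (ht : t * t = 1) :
    DihedralGroup 0 →* G :=
  have hinv (i : ℤ) : (s * t) ^ i * s = s * (s * t) ^ (-i) := by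
    have : SemiconjBy s (s * t)⁻¹ (s * t) := by
      rw [SemiconjBy, mul_inv_rev, inv_eq_of_mul_eq_one_left hs, inv_eq_of_mul_eq_one_left ht,
        mul_assoc]
    rw [zpow_neg, ← inv_zpow]
    exact (this.zpow_right i).eq.symm
  MonoidHom.mk'
    (fun
      | r i => (s * t) ^ (show ℤ from i)
      | sr i => s * (s * t) ^ (show ℤ from i))
    (by
      rintro ((i : ℤ) | (i : ℤ)) ((j : ℤ) | (j : ℤ))
      · exact zpow_add (s * t) i j
      · change s * (s * t) ^ (j - i) = (s * t) ^ i * (s * (s * t) ^ j)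
        rw [← mul_assoc, hinv, mul_assoc, ← zpow_add, neg_add_eq_sub]
      · change s * (s * t) ^ (i + j) = s * (s * t) ^ i * (s * t) ^ j
        rw [zpow_add, mul_assoc]
      · change (s * t) ^ (j - i) = s * (s * t) ^ i * (s * (s * t) ^ j)
        rw [mul_assoc, ← mul_assoc _ s, hinv, mul_assoc s, ← mul_assoc s s, hs, one_mul,
          ← zpow_add, neg_add_eq_sub])

theorem dihedralLift_sr_zero {G : Type*} [Group G] (s t : G) (hs : s * s = 1) (ht : t * t = 1) :
    dihedralLift s t hs ht (sr 0) = s := by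
  change s * (s * t) ^ (0 : ℤ) = s
  rw [zpow_zero, mul_one]

theorem dihedralLift_sr_one {G : Type*} [Group G] (s t : G) (hs : s * s = 1) (ht : t * t = 1) :
    dihedralLift s t hs ht (sr 1) = t := by
  change s * (s * t) ^ (1 : ℤ) = t
  rw [zpow_one, ← mul_assoc, hs, one_mul]

/-- The automorphism of a dihedral group which exchanges the reflections `sr 0` and `sr 1`. -/
def dihedralFlip (n : ℕ) : DihedralGroup n →* DihedralGroup n :=
  MonoidHom.mk'
    (fun
      | r i => r (-i)
      | sr i => sr (1 - i))
    (by rintro (i | i) (j | j) <;> simp <;> ring)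

theorem dihedralFlip_involutive (n : ℕ) : Function.Involutive (dihedralFlip n) := by
  rintro (i | i) <;> simp [dihedralFlip]

theorem sr_smul_ne {n : ℕ} {α : Type*} [MulAction (DihedralGroup n) α]
    (h₀ : ∀ a : α, (sr 0 : DihedralGroup n) • a ≠ a)
    (h₁ : ∀ a : α, (sr 1 : DihedralGroup n) • a ≠ a) (i : ZMod n) (a : α) :
    (sr i : DihedralGroup n) • a ≠ a := by
  have conj_ne {j : ZMod n} (hj : ∀ a : α, sr j • a ≠ a) (m : ZMod n) :
      sr (j + 2 * m) • a ≠ a := by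
    have hconj : sr (j + 2 * m) = (r m)⁻¹ * sr j * r m := by
      rw [inv_r, r_mul_sr, sr_mul_r]
      congr 1
      ring
    rw [hconj, mul_smul, mul_smul, Ne, inv_smul_eq_iff]
    exact hj _
  obtain ⟨z, rfl⟩ := ZMod.intCast_surjective i
  obtain ⟨m, rfl | rfl⟩ := Int.even_or_odd' z
  · simpa using conj_ne h₀ m
  · simpa [add_comm] using conj_ne h₁ m

theorem exists_perm_exchanging_involutions {α : Type*} {σ τ : Equiv.Perm α}
    (hσ : σ * σ = 1) (hτ : τ * τ = 1) (hσ_ne : ∀ a, σ a ≠ a) (hτ_ne : ∀ a, τ a ≠ a) (p : α) :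
    ∃ x : Equiv.Perm α, x p = p ∧ x * σ = τ * x ∧ x * τ = σ * x := by
  let _ := MulAction.compHom α (dihedralLift σ τ hσ hτ)
  have sr_zero_smul (a : α) : (sr 0 : DihedralGroup 0) • a = σ a :=
    DFunLike.congr_fun (dihedralLift_sr_zero σ τ hσ hτ) a
  have sr_one_smul (a : α) : (sr 1 : DihedralGroup 0) • a = τ a :=
    DFunLike.congr_fun (dihedralLift_sr_one σ τ hσ hτ) a
  obtain ⟨x, hxp, hx⟩ := exists_perm_smul_eq_map_smul (dihedralFlip 0)
    (dihedralFlip_involutive 0) (α := α) (p := p) <| by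
      rintro (i | i) a hia
      · change (r i)⁻¹ • a = a
        rw [inv_smul_eq_iff, hia]
      · exact absurd hia (sr_smul_ne (by simpa [sr_zero_smul]) (by simpa [sr_one_smul]) i a)
  refine ⟨x, hxp, ?_, ?_⟩ <;> ext a
  · simpa [dihedralFlip, sr_zero_smul, sr_one_smul] using hx (sr 0) a
  · simpa [dihedralFlip, sr_zero_smul, sr_one_smul] using hx (sr 1) a

theorem inv_mem_doubleCoset_centralizer_inf_stabilizer {α : Type*} {τ : Equiv.Perm α}
    (hτ : τ * τ = 1) (hτ_ne : ∀ a, τ a ≠ a) {p : α} {g : Equiv.Perm α} (hg : g p = p) :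
    let K := Subgroup.centralizer {τ} ⊓ MulAction.stabilizer (Equiv.Perm α) p
    g⁻¹ ∈ doubleCoset g (K : Set (Equiv.Perm α)) K := by
  intro K
  have hσ : g * τ * g⁻¹ * (g * τ * g⁻¹) = 1 := by
    rw [show g * τ * g⁻¹ * (g * τ * g⁻¹) = g * (τ * τ) * g⁻¹ by group, hτ, mul_one, mul_inv_cancel]
  have hσ_ne (a : α) : (g * τ * g⁻¹) a ≠ a := by
    simpa [← Equiv.Perm.eq_inv_iff_eq] using hτ_ne (g⁻¹ a)
  obtain ⟨x, hxp, hxτ, hxσ⟩ := exists_perm_exchanging_involutions hτ hσ hτ_ne hσ_ne p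
  have hg' : g⁻¹ p = p := Equiv.Perm.inv_eq_iff_eq.2 hg.symm
  have hxg : x * g ∈ K := by
    refine ⟨Subgroup.mem_centralizer_singleton_iff.2 ?_, ?_⟩
    · calc x * g * τ = x * (g * τ * g⁻¹) * g := by group
        _ = τ * (x * g) := by rw [hxσ, mul_assoc]
    · change x (g p) = p
      rw [hg, hxp]
  have hgx : g⁻¹ * x ∈ K := by
    refine ⟨Subgroup.mem_centralizer_singleton_iff.2 ?_, ?_⟩
    · rw [mul_assoc, hxτ]
      group
    · change g⁻¹ (x p) = p
      rw [hxp, hg']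
  exact mem_doubleCoset.2 ⟨(x * g)⁻¹, inv_mem hxg, g⁻¹ * x, hgx, by group⟩

/-! ### Adjoining points -/

section AdjoinPoints

variable {α : Type*}

theorem optionHom_injective : Function.Injective (optionHom α) :=
  Equiv.optionCongr_injective

theorem optionHom_apply_none (g : Equiv.Perm α) : optionHom α g none = none :=
  rfl

theorem optionHom_apply_some (g : Equiv.Perm α) (a : α) : optionHom α g (some a) = some (g a) :=
  rfl

theorem exists_optionHom_eq {g : Equiv.Perm (Option α)} (hg : g none = none) :
    ∃ g', optionHom α g' = g := by
  classical
  refine ⟨Equiv.removeNone g, ?_⟩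
  change (Equiv.removeNone g).optionCongr = g
  rw [map_equiv_removeNone, hg, Equiv.swap_self]
  rfl

/-- The extension of a permutation of `α` by the transposition of two new points. -/
def adjoinTransposition (τ : Equiv.Perm α) : Equiv.Perm (Option (Option α)) where
  toFun
    | none => some none
    | some none => none
    | some (some a) => some (some (τ a))
  invFun
    | none => some none
    | some none => none
    | some (some a) => some (some (τ⁻¹ a))
  left_inv := by rintro (_ | _ | a) <;> simp
  right_inv := by rintro (_ | _ | a) <;> simp

theorem adjoinTransposition_mul_self {τ : Equiv.Perm α} (hτ : τ * τ = 1) :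
    adjoinTransposition τ * adjoinTransposition τ = 1 := by
  ext1 (_ | _ | a)
  · rfl
  · rfl
  · exact congrArg (fun b => some (some b)) (DFunLike.congr_fun hτ a)

theorem adjoinTransposition_apply_ne {τ : Equiv.Perm α} (hτ_ne : ∀ a, τ a ≠ a)
    (a : Option (Option α)) : adjoinTransposition τ a ≠ a := by
  rcases a with _ | _ | a <;> simp [adjoinTransposition, hτ_ne]

theorem optionHom_optionHom_mem_centralizer_iff {τ g : Equiv.Perm α} :
    optionHom _ (optionHom _ g) ∈ Subgroup.centralizer {adjoinTransposition τ} ↔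
      g ∈ Subgroup.centralizer {τ} := by
  simp only [Subgroup.mem_centralizer_singleton_iff, Equiv.ext_iff, Option.forall,
    Equiv.Perm.mul_apply, optionHom_apply_none, optionHom_apply_some, adjoinTransposition,
    Equiv.coe_fn_mk, Option.some_inj, true_and]

theorem map_map_optionHom_centralizer (τ : Equiv.Perm α) :
    ((Subgroup.centralizer {τ}).map (optionHom α)).map (optionHom (Option α)) =
      Subgroup.centralizer {adjoinTransposition τ} ⊓
        MulAction.stabilizer (Equiv.Perm (Option (Option α))) (none : Option (Option α)) := by
  apply le_antisymm
  · rintro _ ⟨_, ⟨g, hg, rfl⟩, rfl⟩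
    exact ⟨optionHom_optionHom_mem_centralizer_iff.2 hg, optionHom_apply_none _⟩
  · rintro g ⟨hgτ, hg_none⟩
    obtain ⟨g, rfl⟩ := exists_optionHom_eq hg_none
    have hg_none : g none = none := Option.some_injective _ <|
      DFunLike.congr_fun (Subgroup.mem_centralizer_singleton_iff.1 hgτ) none
    obtain ⟨g, rfl⟩ := exists_optionHom_eq hg_none
    exact ⟨_, ⟨g, optionHom_optionHom_mem_centralizer_iff.1 hgτ, rfl⟩, rfl⟩

end AdjoinPoints

theorem isSymmetricGelfandPair_map_optionHom_centralizer {α : Type*} {τ : Equiv.Perm α}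
    (hτ : τ * τ = 1) (hτ_ne : ∀ a, τ a ≠ a) :
    IsSymmetricGelfandPair ((Subgroup.centralizer {τ}).map (optionHom α)) := by
  refine .of_map optionHom_injective fun g => ?_
  rw [map_map_optionHom_centralizer]
  exact inv_mem_doubleCoset_centralizer_inf_stabilizer (adjoinTransposition_mul_self hτ)
    (adjoinTransposition_apply_ne hτ_ne) (optionHom_apply_none g)

theorem isSymmetricGelfandPair_centralizer {α : Type*} {τ : Equiv.Perm α}
    (hτ : τ * τ = 1) (hτ_ne : ∀ a, τ a ≠ a) :
    IsSymmetricGelfandPair (Subgroup.centralizer {τ}) := by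
  refine .of_map optionHom_injective fun g => ?_
  rw [← map_inv]
  exact isSymmetricGelfandPair_map_optionHom_centralizer hτ hτ_ne (optionHom α g)

/-! ### Partitions into pairs -/

section Pairs

variable {α : Type*} {β : Sort*} {c : α → β}

theorem exists_involution_of_existsUnique_partner (hc : ∀ i, ∃! j, j ≠ i ∧ c j = c i) :
    ∃ τ : Equiv.Perm α, τ * τ = 1 ∧ (∀ i, τ i ≠ i) ∧
      ∀ i j, c i = c j ↔ j = i ∨ j = τ i := by
  choose f hf hf_unique using hc
  have f_invol : Function.Involutive f := fun i =>
    (hf_unique (f i) i ⟨(hf i).1.symm, (hf i).2.symm⟩).symm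
  refine ⟨f_invol.toPerm, Equiv.ext f_invol, fun i => (hf i).1, fun i j => ⟨fun hij => ?_, ?_⟩⟩
  · exact or_iff_not_imp_left.2 fun hji => hf_unique i j ⟨hji, hij.symm⟩
  · rintro (rfl | rfl)
    · rfl
    · exact (hf i).2.symm

theorem colorStab_eq_centralizer {τ : Equiv.Perm α} (hτ_ne : ∀ i, τ i ≠ i)
    (hc : ∀ i j, c i = c j ↔ j = i ∨ j = τ i) :
    colorStab c = Subgroup.centralizer {τ} := by
  ext g
  rw [Subgroup.mem_centralizer_singleton_iff]
  constructor
  · intro hg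
    ext i
    have hgi : c (g i) = c (g (τ i)) := (hg i (τ i)).1 ((hc _ _).2 (Or.inr rfl))
    exact ((hc _ _).1 hgi).resolve_left (g.injective.ne (hτ_ne i))
  · intro hg i j
    have hgi : g (τ i) = τ (g i) := DFunLike.congr_fun hg i
    rw [hc, hc, ← hgi, g.injective.eq_iff, g.injective.eq_iff]

end Pairs

theorem stmt9_general {α : Type} [Finite α] {β : Sort*} (c : α → β)
    (hc : ∀ i, ∃! j, j ≠ i ∧ c j = c i) :
    IsMultFree (colorStab c) ∧ IsMultFree ((colorStab c).map (optionHom α)) := by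
  obtain ⟨τ, hτ, hτ_ne, hcτ⟩ := exists_involution_of_existsUnique_partner hc
  rw [colorStab_eq_centralizer hτ_ne hcτ]
  exact ⟨(isSymmetricGelfandPair_centralizer hτ hτ_ne).isMultFree,
    (isSymmetricGelfandPair_map_optionHom_centralizer hτ hτ_ne).isMultFree⟩

theorem existsUnique_ne_and_div_two_eq (k : ℕ) (i : Fin (2 * k)) :
    ∃! j : Fin (2 * k), j ≠ i ∧ (j : ℕ) / 2 = (i : ℕ) / 2 := by
  -- The two elements of a pair `{2m, 2m + 1}` sum to `4m + 1`.
  refine ⟨⟨4 * (i / 2) + 1 - i, by omega⟩, ?_, fun j hj => ?_⟩ <;>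
    simp only [ne_eq, Fin.ext_iff] at * <;> omega

theorem stmt9 (k : ℕ) (hk : 1 ≤ k) :
    IsMultFree (colorStab (fun i : Fin (2 * k) => (i : ℕ) / 2)) ∧
      IsMultFree ((colorStab (fun i : Fin (2 * k) => (i : ℕ) / 2)).map
        (optionHom (Fin (2 * k)))) := by
  exact stmt9_general _ (existsUnique_ne_and_div_two_eq k)
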